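/- arXiv:1106.6154 — 2 statements merged into one kernel-verified Lean document; each statement's English description precedes it below -/
import Mathlib

section
/- Let G be a finite group, N a normal subgroup of G, ν : G → S_n a group homomorphism into the symmetric group on n letters, and ω ∈ G an element such that the subgroup generated by ω together with N is all of G. Then for every automorphism χ̄ of G/N there exist a positive integer a coprime to the order of ω and a permutation τ ∈ S_n such that (1) for all integers j, χ̄(image of ω^j in G/N) = image of ω^{aj} in G/N, and (2) for all integers j, ν(ω^{aj}) = τ·ν(ω^j)·τ⁻¹. -/
/-!
Since `ω` and `N` generate `G`, the image `w` of `ω` generates `G ⧸ N`, so `χ w = w ^ k` for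
some `k`, and `k` is coprime to the order `m` of `w` because `χ` preserves orders. As `m` divides
the order `M` of `ω`, the reduction map `(ZMod M)ˣ → (ZMod m)ˣ` is surjective, so `k` can be
replaced by some `a ≡ k` modulo `m` that is coprime to `M`. Such an `a` is coprime to the order of
`ν ω`, and raising a permutation to a power coprime to its order preserves its cycle type, so
`ν ω` and `(ν ω) ^ a` are conjugate.
-/

/-- A permutation is conjugate to each of its powers with exponent coprime to its order: such a
power of a cycle is a cycle with the same support, and disjoint cycles can be treated separately. -/
theorem Equiv.Perm.isConj_pow_of_coprime {α : Type*} [Finite α] (σ : Equiv.Perm α) (a : ℕ) :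
    a.Coprime (orderOf σ) → IsConj σ (σ ^ a) := by
  classical
  have := Fintype.ofFinite α
  induction σ using Equiv.Perm.cycle_induction_on with
  | base_one => intro; simp
  | base_cycles σ hσ =>
    intro h
    exact hσ.isConj (hσ.pow_iff.2 h) (by rw [Equiv.Perm.support_pow_coprime h])
  | induction_disjoint σ τ hd _ h₁ h₂ =>
    intro h
    rw [hd.orderOf] at h
    rw [hd.commute.mul_pow]
    exact Equiv.Perm.Disjoint.isConj_mul
      (h₁ (h.coprime_dvd_right (dvd_lcm_left _ _)))
      (h₂ (h.coprime_dvd_right (dvd_lcm_right _ _))) hd (hd.pow_disjoint_pow a a)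

/-- A residue coprime to a divisor `m` of `M` has a positive representative coprime to `M`. -/
theorem Nat.exists_pos_coprime_modEq {m M k : ℕ} (hM : 0 < M) (hm : m ∣ M) (hk : k.Coprime m) :
    ∃ a : ℕ, 0 < a ∧ a.Coprime M ∧ a ≡ k [MOD m] := by
  have : NeZero M := ⟨hM.ne'⟩
  obtain ⟨u, hu⟩ := ZMod.unitsMap_surjective hm (ZMod.unitOfCoprime k hk)
  -- `M` is added because the canonical representative is `0` when `M = 1`.
  refine ⟨(u : ZMod M).val + M, by omega, ?_, ?_⟩
  · simpa using ZMod.val_coe_unit_coprime u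
  · rw [← ZMod.natCast_eq_natCast_iff]
    have h := congrArg Units.val hu
    rw [ZMod.unitsMap_val, ZMod.coe_unitOfCoprime] at h
    rw [Nat.cast_add, (ZMod.natCast_eq_zero_iff M m).2 hm, add_zero, ← h, ZMod.natCast_val]

/-- Full group-theoretic content of the 'cyclic specializations' situation (§3.2.2(c)):
a power map `ω ↦ ω ^ a` (with `a` coprime to the order of `ω`) induces the prescribed
automorphism of `G ⧸ N` and has conjugate `Sₙ`-representation. -/
theorem cyclic_specialization_power_map (G : Type*) [Group G] [Finite G] (n : ℕ)
    (N : Subgroup G) [N.Normal] (ν : G →* Equiv.Perm (Fin n)) (ω : G)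
    (hgen : Subgroup.zpowers ω ⊔ N = ⊤) :
    ∀ χ : (G ⧸ N) ≃* (G ⧸ N), ∃ a : ℕ, ∃ τ : Equiv.Perm (Fin n),
      0 < a ∧ Nat.Coprime a (orderOf ω) ∧
      (∀ j : ℤ, χ (QuotientGroup.mk (ω ^ j)) = (QuotientGroup.mk (ω ^ ((a : ℤ) * j)) : G ⧸ N)) ∧
      (∀ j : ℤ, ν (ω ^ ((a : ℤ) * j)) = τ * ν (ω ^ j) * τ⁻¹) := by
  intro χ
  have hgenw : Subgroup.zpowers (QuotientGroup.mk' N ω) = ⊤ := by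
    have h := congrArg (Subgroup.map (QuotientGroup.mk' N)) hgen
    rwa [Subgroup.map_sup, QuotientGroup.map_mk'_self, sup_bot_eq, MonoidHom.map_zpowers,
      Subgroup.map_top_of_surjective _ (QuotientGroup.mk'_surjective N)] at h
  set w := QuotientGroup.mk' N ω with hw
  obtain ⟨k, hk⟩ : ∃ k : ℕ, w ^ k = χ w := by
    have h : χ w ∈ Subgroup.zpowers w := hgenw ▸ Subgroup.mem_top _
    exact mem_powers_iff_mem_zpowers.2 h
  have hcop : k.Coprime (orderOf w) := by
    have h : orderOf (w ^ k) = orderOf w := by rw [hk, MulEquiv.orderOf_eq]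
    rw [orderOf_pow, Nat.div_eq_self] at h
    exact Nat.Coprime.symm (h.resolve_left (orderOf_pos w).ne')
  obtain ⟨a, ha, haM, hak⟩ := Nat.exists_pos_coprime_modEq (orderOf_pos ω)
    (orderOf_map_dvd (QuotientGroup.mk' N) ω) hcop
  obtain ⟨τ, hτ⟩ := isConj_iff.1 (Equiv.Perm.isConj_pow_of_coprime (ν ω) a
    (haM.coprime_dvd_right (orderOf_map_dvd ν ω)))
  refine ⟨a, τ, ha, haM, fun j => ?_, fun j => ?_⟩
  · change χ (QuotientGroup.mk' N (ω ^ j)) = QuotientGroup.mk' N (ω ^ ((a : ℤ) * j))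
    rw [map_zpow, map_zpow, map_zpow, ← hw, ← hk, zpow_mul, zpow_natCast,
      pow_eq_pow_iff_modEq.2 hak]
  · rw [map_zpow, map_zpow, zpow_mul, zpow_natCast, ← hτ, conj_zpow]
end

section
/- Let n ≥ 3 be an integer. Every conjugacy class in the symmetric group S_n has at most n·(n−2)! elements, and the conjugacy class consisting of the (n−1)-cycles (permutations whose cycle type is a single cycle of length n−1) has exactly n·(n−2)! elements. Equivalently, the centralizer in S_n of any permutation has order at least n−1, with equality for (n−1)-cycles. -/
/-!
A permutation with cycle lengths `l₁, …, l_k ≥ 2` and `m` fixed points has a centralizer of order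
`m! · ∏ lᵢ · ∏ (multiplicities)!`. Numbers that are at least `2` have a sum no larger than their
product, so with `s = ∑ lᵢ` and `p = ∏ lᵢ` this order is at least
`m! · p ≥ m + s - 1 = n - 1`. For an `(n-1)`-cycle it is `1! · (n - 1) · 1! = n - 1`.
The claims on conjugacy classes follow from orbit-stabilizer, as `n! = n · (n - 2)! · (n - 1)`.
-/

/-- A sum of numbers that are at least `2` is at most their product; this includes the empty sum,
which is `0 ≤ 1`. -/
lemma multiset_sum_le_prod_of_two_le (s : Multiset ℕ) (h : ∀ x ∈ s, 2 ≤ x) :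
    s.sum ≤ s.prod := by
  induction s using Multiset.induction_on with
  | empty => simp
  | cons a t ih =>
    have ha : 2 ≤ a := h a (Multiset.mem_cons_self a t)
    have ht : ∀ x ∈ t, 2 ≤ x := fun x hx => h x (Multiset.mem_cons_of_mem hx)
    rcases t.empty_or_exists_mem with rfl | ⟨b, hb⟩
    · simp
    · -- `t.prod ≥ 2`, and `a + q ≤ a * q` as soon as `a, q ≥ 2`
      have h2 : 2 ≤ t.prod :=
        ((ht b hb).trans (Multiset.le_sum_of_mem hb)).trans (ih ht)
      have := ih ht
      rw [Multiset.sum_cons, Multiset.prod_cons]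
      nlinarith [Nat.mul_le_mul ha h2]

/-- The bound `m! · p ≥ m + s - 1`, with `m` fixed points and `p` the product of cycle lengths. -/
lemma add_le_factorial_mul_add_one (m s p : ℕ) (hs : s ≤ p) (hp : 1 ≤ p) :
    m + s ≤ m.factorial * p + 1 := by
  rcases Nat.eq_zero_or_pos m with rfl | hm
  · simp; omega
  · have h1 : m ≤ m.factorial := Nat.self_le_factorial m
    have h2 : m * p ≤ m.factorial * p := Nat.mul_le_mul_right p h1
    nlinarith [Nat.mul_le_mul hm hp, Nat.mul_le_mul_left m hs]

lemma sub_one_le_card_centralizer (n : ℕ) (σ : Equiv.Perm (Fin n)) :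
    n - 1 ≤ Nat.card (Subgroup.centralizer {σ} : Subgroup (Equiv.Perm (Fin n))) := by
  rw [Equiv.Perm.nat_card_centralizer, Fintype.card_fin]
  have h2 : ∀ x ∈ σ.cycleType, 2 ≤ x := fun x hx => Equiv.Perm.two_le_of_mem_cycleType hx
  have hp : 1 ≤ σ.cycleType.prod :=
    Nat.one_le_iff_ne_zero.2 (Multiset.prod_ne_zero fun h => by simpa using h2 0 h)
  have hle := add_le_factorial_mul_add_one (n - σ.cycleType.sum) _ _
    (multiset_sum_le_prod_of_two_le _ h2) hp
  have hc : 1 ≤ ∏ k ∈ σ.cycleType.toFinset, (σ.cycleType.count k).factorial :=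
    Finset.prod_pos fun k _ => Nat.factorial_pos _
  exact le_trans (by omega) (Nat.le_mul_of_pos_right _ hc)

lemma card_centralizer_of_cycleType_eq (n : ℕ) (hn : 3 ≤ n) (σ : Equiv.Perm (Fin n))
    (hσ : σ.cycleType = {n - 1}) :
    Nat.card (Subgroup.centralizer {σ} : Subgroup (Equiv.Perm (Fin n))) = n - 1 := by
  have h : n - (n - 1) = 1 := by omega
  simp [Equiv.Perm.nat_card_centralizer, hσ, h]

lemma card_isConj_mul_card_centralizer (n : ℕ) (hn : 3 ≤ n) (σ : Equiv.Perm (Fin n)) :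
    Nat.card {τ : Equiv.Perm (Fin n) | IsConj σ τ} *
      Nat.card (Subgroup.centralizer {σ} : Subgroup (Equiv.Perm (Fin n))) =
    n * (n - 2).factorial * (n - 1) := by
  rw [Equiv.Perm.nat_card_centralizer, Equiv.Perm.card_isConj_mul_eq, Fintype.card_fin]
  obtain ⟨k, rfl⟩ := Nat.exists_eq_add_of_le' (show 2 ≤ n by omega)
  simp only [Nat.factorial_succ, Nat.add_sub_cancel, show k + 2 - 1 = k + 1 by omega]
  ring


/-- In `Sₙ` (`n ≥ 3`), every conjugacy class has at most `n·(n−2)!` elements, the class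
of `(n−1)`-cycles has exactly `n·(n−2)!` elements; equivalently every centralizer has
order at least `n−1`, with equality for `(n−1)`-cycles. -/
theorem symmGroup_largest_conjugacy_class (n : ℕ) (hn : 3 ≤ n) :
    (∀ σ : Equiv.Perm (Fin n),
      Nat.card {τ : Equiv.Perm (Fin n) | IsConj σ τ} ≤ n * (n - 2).factorial) ∧
    (∀ σ : Equiv.Perm (Fin n), σ.cycleType = {n - 1} →
      Nat.card {τ : Equiv.Perm (Fin n) | IsConj σ τ} = n * (n - 2).factorial) ∧
    (∀ σ : Equiv.Perm (Fin n),
      n - 1 ≤ Nat.card (Subgroup.centralizer {σ} : Subgroup (Equiv.Perm (Fin n)))) ∧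
    (∀ σ : Equiv.Perm (Fin n), σ.cycleType = {n - 1} →
      Nat.card (Subgroup.centralizer {σ} : Subgroup (Equiv.Perm (Fin n))) = n - 1) := by
  have hpos : 0 < n - 1 := by omega
  refine ⟨fun σ => ?_, fun σ hσ => ?_, sub_one_le_card_centralizer n,
    card_centralizer_of_cycleType_eq n hn⟩
  · refine Nat.le_of_mul_le_mul_right ?_ hpos
    rw [← card_isConj_mul_card_centralizer n hn σ]
    exact Nat.mul_le_mul_left _ (sub_one_le_card_centralizer n σ)
  · have h := card_isConj_mul_card_centralizer n hn σ
    rw [card_centralizer_of_cycleType_eq n hn σ hσ] at h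
    exact Nat.eq_of_mul_eq_mul_right hpos h
end
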